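/- Let $n$ be a positive integer. For $\sigma$ in the symmetric group $S_n$ on $\{1,\dots,n\}$, the recoil set $R(\sigma)\subseteq\{1,\dots,n-1\}$ is the set of all $i$ with $\sigma^{-1}(i)>\sigma^{-1}(i+1)$, and for $I\subseteq\{1,\dots,n-1\}$ the recoil class of $I$ is $\mathcal{Y}_I=\{\sigma\in S_n : R(\sigma)=I\}$. Endow $S_n$ with the right Cayley graph structure for the simple transpositions $s_i=(i,i+1)$, $1\le i\le n-1$ ($\sigma$ and $\sigma'$ are adjacent iff $\sigma'=\sigma s_i$ for some $i$), and endow each recoil class with the induced graph structure. Let $I,J,K\subseteq\{1,\dots,n-1\}$. Endow $\mathcal{Y}_I\times\mathcal{Y}_J$ with the product graph structure (two pairs are adjacent iff they agree in one coordinate and are adjacent in the other), and let $\mathcal{Z}_{IJK}=\{(\pi,\rho)\in\mathcal{Y}_I\times\mathcal{Y}_J : \pi\rho\in\mathcal{Y}_K\}$, with the graph structure whose edges are the edges of $\mathcal{Y}_I\times\mathcal{Y}_J$ between elements of $\mathcal{Z}_{IJK}$ that lie over edges of $\mathcal{Y}_K$; that is, $(\pi,\rho)$ and $(\pi',\rho')$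 in $\mathcal{Z}_{IJK}$ are adjacent iff they are adjacent in $\mathcal{Y}_I\times\mathcal{Y}_J$ and $\pi\rho$, $\pi'\rho'$ are adjacent in $\mathcal{Y}_K$. If $\mathcal{Z}_{IJK}$ is nonempty, then the product map $(\pi,\rho)\mapsto\pi\rho$ from $\mathcal{Z}_{IJK}$ to $\mathcal{Y}_K$ is a covering map of graphs: it is surjective, it maps edges to edges, and for every edge $\{\sigma,\tau\}$ of $\mathcal{Y}_K$ and every $(\pi,\rho)\in\mathcal{Z}_{IJK}$ with $\pi\rho=\sigma$ there is a unique $(\pi',\rho')\in\mathcal{Z}_{IJK}$ adjacent to $(\pi,\rho)$ with $\pi'\rho'=\tau$. -/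

import Mathlib

/-!
Conventions. `S_n` is `Equiv.Perm (Fin n)`, so the letters `1, …, n` are shifted to `0, …, n-1`;
the index set `{1, …, n-1}` of the simple transpositions, descents and recoils is `Fin (n - 1)`,
where `i : Fin (n - 1)` stands for the 1-based index `i + 1`.
-/

/-- The letter `i` of `S_n`, for an index `i` of a simple transposition. -/
def lowLetter {n : ℕ} (i : Fin (n - 1)) : Fin n := ⟨i, by omega⟩

/-- The letter `i + 1` of `S_n`, for an index `i` of a simple transposition. -/
def highLetter {n : ℕ} (i : Fin (n - 1)) : Fin n := ⟨i + 1, by omega⟩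

/-- The simple transposition `s_i = (i, i+1)`. -/
def simpleTransposition {n : ℕ} (i : Fin (n - 1)) : Equiv.Perm (Fin n) :=
  Equiv.swap (lowLetter i) (highLetter i)

/-- The descent set: all `i` with `σ(i) > σ(i+1)`. -/
def descentSet {n : ℕ} (σ : Equiv.Perm (Fin n)) : Finset (Fin (n - 1)) :=
  Finset.univ.filter fun i => σ (highLetter i) < σ (lowLetter i)

/-- The recoil set: the descent set of the inverse. -/
def recoilSet {n : ℕ} (σ : Equiv.Perm (Fin n)) : Finset (Fin (n - 1)) :=
  descentSet σ⁻¹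

/-- The recoil class of `I`. -/
def recoilClass {n : ℕ} (I : Finset (Fin (n - 1))) : Set (Equiv.Perm (Fin n)) :=
  {σ | recoilSet σ = I}

/-- The right Cayley graph of `S_n` for the simple transpositions: `σ` and `τ` are adjacent
iff `τ = σ s_i` for some `i`. -/
def cayleyGraph (n : ℕ) : SimpleGraph (Equiv.Perm (Fin n)) :=
  SimpleGraph.mulCayley (Set.range (simpleTransposition (n := n)))

/-- The graph on a recoil class induced from the Cayley graph. -/
def recoilGraph {n : ℕ} (I : Finset (Fin (n - 1))) : SimpleGraph (recoilClass I) :=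
  (cayleyGraph n).induce (recoilClass I)

/-- The set of pairs in `𝒴_I × 𝒴_J` whose product lies in `𝒴_K`. -/
def factorizationSet {n : ℕ} (I J K : Finset (Fin (n - 1))) :
    Set (recoilClass I × recoilClass J) :=
  {p | (p.1 : Equiv.Perm (Fin n)) * (p.2 : Equiv.Perm (Fin n)) ∈ recoilClass K}

/-- The product map `(π, ρ) ↦ πρ` from `𝒵_{IJK}` to `𝒴_K`. -/
def productMap {n : ℕ} (I J K : Finset (Fin (n - 1))) :
    factorizationSet I J K → recoilClass K :=
  fun p => ⟨(p.1.1 : Equiv.Perm (Fin n)) * (p.1.2 : Equiv.Perm (Fin n)), p.2⟩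

/-- The graph on `𝒵_{IJK}`: its edges are the edges of the product graph `𝒴_I □ 𝒴_J` with both
ends in `𝒵_{IJK}` that lie over an edge of `𝒴_K`, i.e. whose ends have adjacent products.
(The product graph can also join two pairs of `𝒵_{IJK}` with non-adjacent products; these pairs
are not joined here.) -/
def factorizationGraph {n : ℕ} (I J K : Finset (Fin (n - 1))) :
    SimpleGraph (factorizationSet I J K) :=
  (recoilGraph I □ recoilGraph J).induce (factorizationSet I J K) ⊓
    (recoilGraph K).comap (productMap I J K)

/-- Covering maps of simple graphs. -/
structure IsGraphCovering {V W : Type*} (G : SimpleGraph V) (H : SimpleGraph W) (f : V → W) :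
    Prop where
  surjective : Function.Surjective f
  map_adj : ∀ u v : V, G.Adj u v → H.Adj (f u) (f v)
  existsUnique_lift : ∀ w z : W, H.Adj w z → ∀ u : V, f u = w → ∃! v : V, G.Adj u v ∧ f v = z

/-- Two letters are consecutive if they differ by one. -/
def Consecutive {n : ℕ} (a b : Fin n) : Prop := (a : ℕ) + 1 = b ∨ (b : ℕ) + 1 = a

theorem perm_inv_apply_self {α : Type*} (σ : Equiv.Perm α) (x : α) : σ⁻¹ (σ x) = x :=
  σ.symm_apply_apply x

theorem perm_apply_inv_self {α : Type*} (σ : Equiv.Perm α) (x : α) : σ (σ⁻¹ x) = x :=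
  σ.apply_symm_apply x

theorem mem_recoilSet {n : ℕ} {σ : Equiv.Perm (Fin n)} {i : Fin (n - 1)} :
    i ∈ recoilSet σ ↔ σ⁻¹ (highLetter i) < σ⁻¹ (lowLetter i) := by
  simp [recoilSet, descentSet]

theorem lowLetter_lt_highLetter {n : ℕ} (i : Fin (n - 1)) : lowLetter i < highLetter i := by
  simp [lowLetter, highLetter, Fin.lt_def]

theorem simpleTransposition_mul_self {n : ℕ} (i : Fin (n - 1)) :
    simpleTransposition i * simpleTransposition i = 1 := Equiv.swap_mul_self _ _

theorem simpleTransposition_ne_one {n : ℕ} (i : Fin (n - 1)) : simpleTransposition i ≠ 1 :=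
  fun h => (lowLetter_lt_highLetter i).ne (Equiv.swap_eq_one_iff.1 h)

theorem cayleyGraph_adj {n : ℕ} {σ τ : Equiv.Perm (Fin n)} :
    (cayleyGraph n).Adj σ τ ↔ ∃ i, τ = σ * simpleTransposition i := by
  rw [cayleyGraph, SimpleGraph.mulCayley_adj']
  constructor
  · rintro ⟨-, g, ⟨i, rfl⟩, h | h⟩
    · exact ⟨i, h.symm⟩
    · exact ⟨i, by rw [h, mul_assoc, simpleTransposition_mul_self, mul_one]⟩
  · rintro ⟨i, rfl⟩
    exact ⟨fun h => simpleTransposition_ne_one i (by simpa using h.symm), _, ⟨i, rfl⟩, Or.inl rfl⟩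

/-- A simple transposition preserves the order of two letters other than the pair it exchanges. -/
theorem simpleTransposition_lt_iff {n : ℕ} (i : Fin (n - 1)) {x y : Fin n}
    (h₁ : ¬(x = lowLetter i ∧ y = highLetter i)) (h₂ : ¬(x = highLetter i ∧ y = lowLetter i)) :
    simpleTransposition i x < simpleTransposition i y ↔ x < y := by
  simp only [simpleTransposition, Equiv.swap_apply_def, lowLetter, highLetter, Fin.ext_iff] at *
  split_ifs <;> simp only [Fin.lt_def] <;> omega

theorem exists_letters_of_consecutive {n : ℕ} {a b : Fin n} (h : Consecutive a b) :
    ∃ j : Fin (n - 1), (a = lowLetter j ∧ b = highLetter j) ∨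
      (a = highLetter j ∧ b = lowLetter j) := by
  rcases h with h | h
  · exact ⟨⟨a, by omega⟩, Or.inl ⟨rfl, Fin.ext h.symm⟩⟩
  · exact ⟨⟨b, by omega⟩, Or.inr ⟨Fin.ext h.symm, rfl⟩⟩

theorem consecutive_letters {n : ℕ} (j : Fin (n - 1)) :
    Consecutive (lowLetter j) (highLetter j) := Or.inl rfl

theorem Consecutive.symm {n : ℕ} {a b : Fin n} (h : Consecutive a b) : Consecutive b a := Or.symm h

theorem simpleTransposition_inv {n : ℕ} (i : Fin (n - 1)) :
    (simpleTransposition i)⁻¹ = simpleTransposition i := Equiv.swap_inv _ _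

theorem mul_simpleTransposition_inv_apply {n : ℕ} (σ : Equiv.Perm (Fin n)) (i : Fin (n - 1))
    (x : Fin n) : (σ * simpleTransposition i)⁻¹ x = simpleTransposition i (σ⁻¹ x) := by
  rw [mul_inv_rev, simpleTransposition_inv, Equiv.Perm.mul_apply]

theorem recoilSet_mul_simpleTransposition_eq_iff {n : ℕ} (σ : Equiv.Perm (Fin n))
    (i : Fin (n - 1)) : recoilSet (σ * simpleTransposition i) = recoilSet σ ↔
      ¬Consecutive (σ (lowLetter i)) (σ (highLetter i)) := by
  have hlt := lowLetter_lt_highLetter i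
  have hlow : simpleTransposition i (lowLetter i) = highLetter i := Equiv.swap_apply_left _ _
  have hhigh : simpleTransposition i (highLetter i) = lowLetter i := Equiv.swap_apply_right _ _
  constructor
  · intro h hc
    obtain ⟨j, ⟨h₁, h₂⟩ | ⟨h₁, h₂⟩⟩ := exists_letters_of_consecutive hc
    all_goals
      have hj := Finset.ext_iff.1 h j
      rw [mem_recoilSet, mem_recoilSet, mul_simpleTransposition_inv_apply,
        mul_simpleTransposition_inv_apply, ← h₁, ← h₂, perm_inv_apply_self,
        perm_inv_apply_self, hlow, hhigh] at hj
    · exact (hj.1 hlt).asymm hlt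
    · exact (hj.2 hlt).asymm hlt
  · intro hc
    ext j
    rw [mem_recoilSet, mem_recoilSet, mul_simpleTransposition_inv_apply,
      mul_simpleTransposition_inv_apply]
    apply simpleTransposition_lt_iff
    all_goals
      rintro ⟨h₁, h₂⟩
      apply hc
      rw [← h₁, ← h₂, perm_apply_inv_self, perm_apply_inv_self]
    · exact (consecutive_letters j).symm
    · exact consecutive_letters j

theorem mul_simpleTransposition_mem_recoilClass {n : ℕ} {K : Finset (Fin (n - 1))}
    {σ : Equiv.Perm (Fin n)} (hσ : σ ∈ recoilClass K) (i : Fin (n - 1)) :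
    σ * simpleTransposition i ∈ recoilClass K ↔
      ¬Consecutive (σ (lowLetter i)) (σ (highLetter i)) := by
  rw [← recoilSet_mul_simpleTransposition_eq_iff]
  exact ⟨fun h => Eq.trans h (Eq.symm hσ), fun h => Eq.trans h hσ⟩

theorem recoilGraph_adj {n : ℕ} {K : Finset (Fin (n - 1))} {σ τ : recoilClass K} :
    (recoilGraph K).Adj σ τ ↔ ∃ i, τ.1 = σ.1 * simpleTransposition i :=
  cayleyGraph_adj

/-- If all descents of `σ` are by one step, then between the occurrences of two values `b > a`
of `σ`, in this order, all values in between occur. -/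
theorem exists_apply_eq_of_descents_by_one {n : ℕ} {σ : Equiv.Perm (Fin n)}
    (hσ : ∀ i : Fin (n - 1), (σ (lowLetter i) : ℕ) ≤ σ (highLetter i) + 1) (c : Fin n) (d : ℕ) :
    ∀ p q : Fin n, (p : ℕ) + d = q → σ q ≤ c → c ≤ σ p → ∃ r, p ≤ r ∧ r ≤ q ∧ σ r = c := by
  induction d with
  | zero =>
    intro p q hpq hq hp
    obtain rfl : p = q := Fin.ext hpq
    exact ⟨p, le_rfl, le_rfl, le_antisymm hq hp⟩
  | succ d ih =>
    intro p q hpq hq hp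
    rcases hp.eq_or_lt with h | h
    · exact ⟨p, le_rfl, Fin.le_def.2 (by omega), h.symm⟩
    · have hi := hσ ⟨p, by omega⟩
      obtain ⟨r, h₁, h₂, h₃⟩ := ih (highLetter ⟨p, by omega⟩) q (by simp [highLetter]; omega) hq
        (by simp only [lowLetter, Fin.eta, Fin.le_def, Fin.lt_def] at *; omega)
      exact ⟨r, le_trans (lowLetter_lt_highLetter ⟨p, _⟩).le h₁, h₂, h₃⟩

/-- If all descents of `σ` are by one step, an inversion of the values `a < b` forces every index
in `[a, b)` to be a recoil. -/
theorem mem_recoilSet_of_descents_by_one {n : ℕ} {σ : Equiv.Perm (Fin n)}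
    (hσ : ∀ i : Fin (n - 1), (σ (lowLetter i) : ℕ) ≤ σ (highLetter i) + 1) (d : ℕ) :
    ∀ a b : Fin n, (a : ℕ) + d = b → σ⁻¹ b < σ⁻¹ a →
      ∀ i : Fin (n - 1), (a : ℕ) ≤ i → (i : ℕ) < b → i ∈ recoilSet σ := by
  induction d with
  | zero => intro a b hab _ i h₁ h₂; omega
  | succ d ih =>
    intro a b hab hinv i h₁ h₂
    let c : Fin n := ⟨a + 1, by omega⟩
    have hc : (c : ℕ) = a + 1 := rfl
    obtain ⟨r, hr₁, hr₂, hr₃⟩ := exists_apply_eq_of_descents_by_one hσ c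
      ((σ⁻¹ a : ℕ) - σ⁻¹ b) (σ⁻¹ b) (σ⁻¹ a) (by rw [Fin.lt_def] at hinv; omega)
      (by rw [perm_apply_inv_self, Fin.le_def]; omega)
      (by rw [perm_apply_inv_self, Fin.le_def]; omega)
    obtain rfl : r = σ⁻¹ c := by rw [← hr₃, perm_inv_apply_self]
    rcases h₁.eq_or_lt with h | h
    · have ha : lowLetter i = a := Fin.ext h.symm
      have hc' : highLetter i = c := Fin.ext (by simp [highLetter, hc, h])
      rw [mem_recoilSet, ha, hc']
      exact lt_of_le_of_ne hr₂ fun h => by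
        have := congrArg Fin.val (σ⁻¹.injective h); omega
    · refine ih c b (by omega) (lt_of_le_of_ne hr₁ fun h => ?_) i (by omega) h₂
      have := congrArg Fin.val (σ⁻¹.injective h); omega

/-- If every index in `[a, b)` is a recoil, then the values `a < b` are inverted. -/
theorem inv_apply_lt_of_mem_recoilSet {n : ℕ} {σ : Equiv.Perm (Fin n)} (d : ℕ) :
    ∀ a b : Fin n, (a : ℕ) + (d + 1) = b →
      (∀ i : Fin (n - 1), (a : ℕ) ≤ i → (i : ℕ) < b → i ∈ recoilSet σ) → σ⁻¹ b < σ⁻¹ a := by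
  induction d with
  | zero =>
    intro a b hab h
    have := mem_recoilSet.1 (h ⟨a, by omega⟩ le_rfl (by simp; omega))
    have hb : highLetter ⟨a, by omega⟩ = b := Fin.ext (by simp [highLetter]; omega)
    rwa [hb] at this
  | succ d ih =>
    intro a b hab h
    have h₁ := mem_recoilSet.1 (h ⟨a, by omega⟩ le_rfl (by simp; omega))
    refine (ih (highLetter ⟨a, by omega⟩) b (by simp [highLetter]; omega)
      fun i hi => h i ?_).trans h₁
    simp [highLetter] at hi
    omega

theorem inv_apply_lt_iff_of_descents_by_one {n : ℕ} {σ : Equiv.Perm (Fin n)}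
    (hσ : ∀ i : Fin (n - 1), (σ (lowLetter i) : ℕ) ≤ σ (highLetter i) + 1) {a b : Fin n}
    (hab : a < b) : σ⁻¹ b < σ⁻¹ a ↔
      ∀ i : Fin (n - 1), (a : ℕ) ≤ i → (i : ℕ) < b → i ∈ recoilSet σ := by
  rw [Fin.lt_def] at hab
  exact ⟨mem_recoilSet_of_descents_by_one hσ (b - a) a b (by omega),
    inv_apply_lt_of_mem_recoilSet (b - a - 1) a b (by omega)⟩

/-- A permutation is determined by the relative order of the positions of its values. -/
theorem perm_eq_of_inv_apply_lt_iff {n : ℕ} {σ τ : Equiv.Perm (Fin n)}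
    (h : ∀ a b : Fin n, a < b → (σ⁻¹ b < σ⁻¹ a ↔ τ⁻¹ b < τ⁻¹ a)) : σ = τ := by
  have hle : ∀ a b : Fin n, σ⁻¹ a < σ⁻¹ b → τ⁻¹ a < τ⁻¹ b := by
    intro a b hab
    rcases lt_trichotomy a b with hlt | rfl | hlt
    · refine lt_of_le_of_ne (not_lt.1 fun hc => hab.asymm ((h a b hlt).2 hc)) fun he => ?_
      exact hlt.ne (τ⁻¹.injective he)
    · exact absurd hab (lt_irrefl _)
    · exact (h b a hlt).1 hab
  have hmono : StrictMono (τ⁻¹ * σ) := fun x y hxy => hle _ _ (by simpa using hxy)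
  have hid : τ⁻¹ * σ = 1 := by
    have := Subsingleton.elim (hmono.orderIsoOfSurjective _ (τ⁻¹ * σ).surjective)
      (OrderIso.refl (Fin n))
    ext x
    exact congrArg (fun e : Fin n ≃o Fin n => (e x : ℕ)) this
  exact (inv_mul_eq_one.1 hid).symm

theorem eq_of_descents_by_one {n : ℕ} {σ τ : Equiv.Perm (Fin n)}
    (hσ : ∀ i : Fin (n - 1), (σ (lowLetter i) : ℕ) ≤ σ (highLetter i) + 1)
    (hτ : ∀ i : Fin (n - 1), (τ (lowLetter i) : ℕ) ≤ τ (highLetter i) + 1)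
    (h : recoilSet σ = recoilSet τ) : σ = τ :=
  perm_eq_of_inv_apply_lt_iff fun a b hab => by
    rw [inv_apply_lt_iff_of_descents_by_one hσ hab, inv_apply_lt_iff_of_descents_by_one hτ hab, h]

theorem toLex_mul_simpleTransposition_lt {n : ℕ} {σ : Equiv.Perm (Fin n)} {i : Fin (n - 1)}
    (h : σ (highLetter i) < σ (lowLetter i)) :
    toLex (⇑(σ * simpleTransposition i)) < toLex ⇑σ := by
  refine ⟨lowLetter i, fun j hj => ?_, ?_⟩
  · exact congrArg σ (Equiv.swap_apply_of_ne_of_ne hj.ne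
      (hj.trans (lowLetter_lt_highLetter i)).ne)
  · change σ (simpleTransposition i (lowLetter i)) < σ (lowLetter i)
    rwa [simpleTransposition, Equiv.swap_apply_left]

/-- Every component of a recoil graph contains a permutation whose descents are all by one step. -/
theorem exists_reachable_descents_by_one {n : ℕ} {K : Finset (Fin (n - 1))} (σ : recoilClass K) :
    ∃ τ : recoilClass K, (recoilGraph K).Reachable σ τ ∧
      ∀ i : Fin (n - 1), (τ.1 (lowLetter i) : ℕ) ≤ τ.1 (highLetter i) + 1 := by
  obtain ⟨τ, hτ, hmin⟩ := Set.exists_min_image {τ | (recoilGraph K).Reachable σ τ}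
    (fun τ => toLex (⇑(τ : Equiv.Perm (Fin n)))) (Set.toFinite _) ⟨σ, SimpleGraph.Reachable.refl σ⟩
  refine ⟨τ, hτ, fun i => not_lt.1 fun hi => ?_⟩
  have hmem := (mul_simpleTransposition_mem_recoilClass τ.2 i).2 (by unfold Consecutive; omega)
  have hadj : (recoilGraph K).Adj τ ⟨_, hmem⟩ := recoilGraph_adj.2 ⟨i, rfl⟩
  exact (hmin _ (hτ.trans hadj.reachable)).not_gt
    (toLex_mul_simpleTransposition_lt (Fin.lt_def.2 (by omega)))

theorem recoilGraph_preconnected {n : ℕ} (K : Finset (Fin (n - 1))) :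
    (recoilGraph K).Preconnected := by
  intro σ τ
  obtain ⟨σ', hσ, hσ'⟩ := exists_reachable_descents_by_one σ
  obtain ⟨τ', hτ, hτ'⟩ := exists_reachable_descents_by_one τ
  have h : σ' = τ' := Subtype.ext (eq_of_descents_by_one hσ' hτ' (Eq.trans σ'.2 (Eq.symm τ'.2)))
  exact hσ.trans (h ▸ hτ.symm)

theorem consecutive_of_swap_eq_simpleTransposition {n : ℕ} {a b : Fin n} (hab : a ≠ b)
    {j : Fin (n - 1)} (h : Equiv.swap a b = simpleTransposition j) : Consecutive a b := by
  have h₁ := Equiv.congr_fun h a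
  rw [Equiv.swap_apply_left, simpleTransposition, Equiv.swap_apply_def] at h₁
  split_ifs at h₁ with h₂ h₃
  · rw [h₁, h₂]; exact consecutive_letters j
  · rw [h₁, h₃]; exact (consecutive_letters j).symm
  · exact absurd h₁.symm hab

theorem exists_swap_eq_simpleTransposition {n : ℕ} {a b : Fin n} (h : Consecutive a b) :
    ∃ j : Fin (n - 1), Equiv.swap a b = simpleTransposition j := by
  obtain ⟨j, ⟨rfl, rfl⟩ | ⟨rfl, rfl⟩⟩ := exists_letters_of_consecutive h
  · exact ⟨j, rfl⟩
  · exact ⟨j, Equiv.swap_comm _ _⟩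

theorem mul_simpleTransposition_eq_swap_mul {n : ℕ} (ρ : Equiv.Perm (Fin n)) (i : Fin (n - 1)) :
    ρ * simpleTransposition i = Equiv.swap (ρ (lowLetter i)) (ρ (highLetter i)) * ρ :=
  Equiv.mul_swap_eq_swap_mul _ _ _

theorem factorizationGraph_adj {n : ℕ} {I J K : Finset (Fin (n - 1))}
    {u v : factorizationSet I J K} : (factorizationGraph I J K).Adj u v ↔
      ((recoilGraph I).Adj u.1.1 v.1.1 ∧ u.1.2 = v.1.2 ∨
        (recoilGraph J).Adj u.1.2 v.1.2 ∧ u.1.1 = v.1.1) ∧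
      (recoilGraph K).Adj (productMap I J K u) (productMap I J K v) := Iff.rfl

/-- Over an edge `πρ — πρ s_i`, a neighbour of `(π, ρ)` is `(π, ρ s_i)` when `ρ(i), ρ(i+1)` are not
consecutive, and has second coordinate `ρ` otherwise. -/
theorem factorizationGraph_adj_cases {n : ℕ} {I J K : Finset (Fin (n - 1))}
    {u v : factorizationSet I J K} (h : (factorizationGraph I J K).Adj u v) {i : Fin (n - 1)}
    (hi : (productMap I J K v : Equiv.Perm (Fin n)) =
      productMap I J K u * simpleTransposition i) :
    (Consecutive (u.1.2.1 (lowLetter i)) (u.1.2.1 (highLetter i)) ∧ v.1.2 = u.1.2) ∨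
      (¬Consecutive (u.1.2.1 (lowLetter i)) (u.1.2.1 (highLetter i)) ∧ v.1.1 = u.1.1) := by
  change v.1.1.1 * v.1.2.1 = u.1.1.1 * u.1.2.1 * simpleTransposition i at hi
  obtain ⟨h | h, -⟩ := factorizationGraph_adj.1 h
  · refine Or.inl ⟨?_, h.2.symm⟩
    obtain ⟨j, hj⟩ := recoilGraph_adj.1 h.1
    rw [hj, ← h.2, mul_assoc, mul_assoc, mul_simpleTransposition_eq_swap_mul, mul_right_inj,
      mul_left_inj] at hi
    exact consecutive_of_swap_eq_simpleTransposition
      (u.1.2.1.injective.ne (lowLetter_lt_highLetter i).ne) hi.symm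
  · refine Or.inr ⟨?_, h.2.symm⟩
    rw [← h.2, mul_assoc, mul_right_inj] at hi
    exact (mul_simpleTransposition_mem_recoilClass u.1.2.2 i).1 (hi ▸ v.1.2.2)

/-- Edges of `𝒴_K` lift uniquely along the product map. -/
theorem existsUnique_lift_productMap {n : ℕ} {I J K : Finset (Fin (n - 1))} {z : recoilClass K}
    (u : factorizationSet I J K) (hz : (recoilGraph K).Adj (productMap I J K u) z) :
    ∃! v, (factorizationGraph I J K).Adj u v ∧ productMap I J K v = z := by
  obtain ⟨i, hi⟩ := recoilGraph_adj.1 hz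
  have hK := (mul_simpleTransposition_mem_recoilClass (productMap I J K u).2 i).1 (hi ▸ z.2)
  apply existsUnique_of_exists_of_unique
  · by_cases hc : Consecutive (u.1.2.1 (lowLetter i)) (u.1.2.1 (highLetter i))
    · obtain ⟨j, hj⟩ := exists_swap_eq_simpleTransposition hc
      have hI : u.1.1.1 * simpleTransposition j ∈ recoilClass I := by
        rw [mul_simpleTransposition_mem_recoilClass u.1.1.2]
        intro hcj
        obtain ⟨k, hk⟩ := exists_swap_eq_simpleTransposition hcj
        refine hK (consecutive_of_swap_eq_simpleTransposition
          ((productMap I J K u).1.injective.ne (lowLetter_lt_highLetter i).ne) (j := k) ?_)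
        change Equiv.swap (u.1.1.1 (u.1.2.1 (lowLetter i))) (u.1.1.1 (u.1.2.1 (highLetter i))) = _
        rw [← hk, ← mul_left_inj u.1.1.1, ← Equiv.mul_swap_eq_swap_mul, hj,
          mul_simpleTransposition_eq_swap_mul]
      have hprod : u.1.1.1 * simpleTransposition j * u.1.2.1 = z := by
        rw [hi, ← hj, mul_assoc, ← mul_simpleTransposition_eq_swap_mul, ← mul_assoc]
        rfl
      let v : factorizationSet I J K := ⟨(⟨_, hI⟩, u.1.2), show _ ∈ recoilClass K from hprod ▸ z.2⟩
      have hv : productMap I J K v = z := Subtype.ext hprod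
      exact ⟨v, factorizationGraph_adj.2
        ⟨Or.inl ⟨recoilGraph_adj.2 ⟨j, rfl⟩, rfl⟩, hv.symm ▸ hz⟩, hv⟩
    · have hJ := (mul_simpleTransposition_mem_recoilClass u.1.2.2 i).2 hc
      have hprod : u.1.1.1 * (u.1.2.1 * simpleTransposition i) = z := by
        rw [hi, ← mul_assoc]
        rfl
      let v : factorizationSet I J K := ⟨(u.1.1, ⟨_, hJ⟩), show _ ∈ recoilClass K from hprod ▸ z.2⟩
      have hv : productMap I J K v = z := Subtype.ext hprod
      exact ⟨v, factorizationGraph_adj.2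
        ⟨Or.inr ⟨recoilGraph_adj.2 ⟨i, rfl⟩, rfl⟩, hv.symm ▸ hz⟩, hv⟩
  · rintro v w ⟨hv, rfl⟩ ⟨hw, hwz⟩
    have hprod : w.1.1.1 * w.1.2.1 = v.1.1.1 * v.1.2.1 := congrArg Subtype.val hwz
    rcases factorizationGraph_adj_cases hv hi with ⟨hc, h⟩ | ⟨hc, h⟩ <;>
      rcases factorizationGraph_adj_cases hw (hwz ▸ hi) with ⟨hc', h'⟩ | ⟨hc', h'⟩
    · rw [h, h', mul_left_inj] at hprod
      exact Subtype.ext (Prod.ext (Subtype.ext hprod.symm) (h.trans h'.symm))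
    · exact absurd hc hc'
    · exact absurd hc' hc
    · rw [h, h', mul_right_inj] at hprod
      exact Subtype.ext (Prod.ext (h.trans h'.symm) (Subtype.ext hprod.symm))

/-- A map to a preconnected graph along which edges lift is surjective. -/
theorem surjective_of_exists_lift {V W : Type*} [Nonempty V] {H : SimpleGraph W} {f : V → W}
    (hH : H.Preconnected) (hf : ∀ u z, H.Adj (f u) z → ∃ v, f v = z) :
    Function.Surjective f := by
  intro z
  obtain ⟨u⟩ := ‹Nonempty V›
  suffices ∀ a b : W, H.Walk a b → a ∈ Set.range f → b ∈ Set.range f by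
    obtain ⟨p⟩ := hH (f u) z
    exact this _ _ p ⟨u, rfl⟩
  intro a b p
  induction p with
  | nil => exact id
  | cons h _ ih =>
    rintro ⟨v, rfl⟩
    exact ih (hf v _ h)

/-- If `𝒵_{IJK}` is nonempty, the product map `𝒵_{IJK} → 𝒴_K` is a covering map of graphs. -/
theorem statement7 (n : ℕ) (hn : 0 < n) (I J K : Finset (Fin (n - 1)))
    (hZ : (factorizationSet I J K).Nonempty) :
    IsGraphCovering (factorizationGraph I J K) (recoilGraph K) (productMap I J K) where
  surjective :=
    have := hZ.to_subtype
    surjective_of_exists_lift (recoilGraph_preconnected K) fun u _ h =>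
      let ⟨v, hv, _⟩ := existsUnique_lift_productMap u h
      ⟨v, hv.2⟩
  map_adj _ _ h := (factorizationGraph_adj.1 h).2
  existsUnique_lift := by
    rintro _ z h u rfl
    exact existsUnique_lift_productMap u h
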